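/- Let F be a finite field of odd cardinality q and let ε ∈ F be a nonsquare. Then the number of quadruples (a, b, c, d) ∈ F⁴ with a·d − b·c = 1 such that d² − ε·b² is a nonzero square in F equals q(q² − 1)/2, i.e. exactly half of the elements of SL(2,F) satisfy this condition. (This is the Frobenius-point count underlying Lemma 'unram.elements' of the paper, which asserts the corresponding motivic volume is ½·L(L−1)(L+1).) -/

import Mathlib

/-!
A matrix of determinant one is determined by its second column `(b, d)` together with a point of
the affine line of Bézout relations of `(b, d)`, so `SL(2, F)` has `q` elements over each nonzero
column. Now `d ^ 2 - ε * b ^ 2` is the norm of `d + b √ε` from the quadratic extension `F(√ε)`.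
Norms of finite fields are surjective on unit groups, so the elements of `F(√ε)ˣ` with square norm
have the same index, two, as the squares in the cyclic group `Fˣ`.
-/

section Column

variable {R : Type*} [CommRing R] {u v b d : R}

/-- The first columns `(a, c)` completing `(b, d)` to a matrix of determinant one, parametrised by
`R`. A Bézout relation `u * b + v * d = 1` picks the base point `(v, -u)` of this affine line. -/
def detOneColumnEquiv (h : u * b + v * d = 1) :
    {p : R × R // p.1 * d - b * p.2 = 1} ≃ R where
  toFun p := u * p.1.1 + v * p.1.2
  invFun s := ⟨(v + b * s, d * s - u), by linear_combination h⟩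
  left_inv := by
    rintro ⟨⟨a, c⟩, hac⟩
    refine Subtype.ext (Prod.ext ?_ ?_)
    · linear_combination a * h - v * hac
    · linear_combination c * h + u * hac
  right_inv s := by linear_combination s * h

theorem card_det_eq_one_and_eq_mul (P : R → R → Prop) (hP : ∀ b d, P b d → IsCoprime b d) :
    Nat.card {t : R × R × R × R // t.1 * t.2.2.2 - t.2.1 * t.2.2.1 = 1 ∧ P t.2.1 t.2.2.2} =
      Nat.card R * Nat.card {p : R × R // P p.1 p.2} := by
  choose u v huv using hP
  let sortByColumn :
      {t : R × R × R × R // t.1 * t.2.2.2 - t.2.1 * t.2.2.1 = 1 ∧ P t.2.1 t.2.2.2} ≃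
        (p : {p : R × R // P p.1 p.2}) × {r : R × R // r.1 * p.1.2 - p.1.1 * r.2 = 1} :=
    { toFun t := ⟨⟨(t.1.2.1, t.1.2.2.2), t.2.2⟩, ⟨(t.1.1, t.1.2.2.1), t.2.1⟩⟩
      invFun s := ⟨(s.2.1.1, s.1.1.1, s.2.1.2, s.1.1.2), s.2.2, s.1.2⟩ }
  let e := sortByColumn.trans <|
    (Equiv.sigmaCongrRight fun p ↦ detOneColumnEquiv (huv _ _ p.2)).trans (Equiv.sigmaEquivProd _ R)
  rw [Nat.card_congr e, Nat.card_prod, mul_comm]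

end Column

section Norm

variable (K L : Type*) [Field K] [Field L] [Algebra K L] [Finite L]

theorem card_norm_eq_pow_mul_gcd (n : ℕ) :
    Nat.card {z : L // ∃ x : K, x ≠ 0 ∧ Algebra.norm K z = x ^ n} * (Nat.card K - 1).gcd n =
      Nat.card L - 1 := by
  have : Finite K := Finite.of_injective _ (algebraMap K L).injective
  let N : Lˣ →* Kˣ := Units.map (Algebra.norm K)
  let H : Subgroup Lˣ := (powMonoidHom n).range.comap N
  have index_H : H.index = (Nat.card K - 1).gcd n := by
    rw [Subgroup.index_comap_of_surjective _ (FiniteField.unitsMap_norm_surjective K L),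
      IsCyclic.index_powMonoidHom_range, Nat.card_units]
  have card_H : Nat.card H = Nat.card {z : L // ∃ x : K, x ≠ 0 ∧ Algebra.norm K z = x ^ n} := by
    refine Nat.card_congr (Equiv.ofBijective (fun z ↦ ⟨z.1, ?_⟩) ⟨?_, ?_⟩)
    · obtain ⟨x, hx⟩ := z.2
      exact ⟨x, x.ne_zero, congr_arg Units.val hx.symm⟩
    · intro z w h
      exact Subtype.ext (Units.ext (congr_arg Subtype.val h))
    · rintro ⟨z, x, hx, hz⟩
      have hz0 : z ≠ 0 := Algebra.norm_ne_zero_iff.mp (hz ▸ pow_ne_zero n hx)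
      exact ⟨⟨Units.mk0 z hz0, Units.mk0 x hx, Units.ext hz.symm⟩, rfl⟩
  rw [← card_H, ← index_H, H.card_mul_index, Nat.card_units]

end Norm

section Quadratic

variable {R : Type*} [CommRing R]

theorem isCoprime_of_isUnit_sq_sub_mul_sq {ε b d : R} (h : IsUnit (d ^ 2 - ε * b ^ 2)) :
    IsCoprime b d := by
  obtain ⟨w, hw⟩ := h.exists_left_inv
  exact ⟨-w * ε * b, w * d, by linear_combination hw⟩

theorem algebraNorm_quadraticAlgebra {a b : R} (z : QuadraticAlgebra R a b) :
    Algebra.norm R z = z.re ^ 2 + b * z.re * z.im - a * z.im ^ 2 :=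
  calc
    Algebra.norm R z = z.norm := z.det_toLinearMap_eq_norm
    _ = z.re ^ 2 + b * z.re * z.im - a * z.im ^ 2 := by rw [z.norm_def]; ring

variable {F : Type*} [Field F] [Finite F] {ε : F}

theorem card_sq_sub_mul_sq_eq_pow_mul_gcd (hε : ¬ IsSquare ε) (n : ℕ) :
    Nat.card {p : F × F // ∃ x : F, x ≠ 0 ∧ p.2 ^ 2 - ε * p.1 ^ 2 = x ^ n} *
      (Nat.card F - 1).gcd n = Nat.card F ^ 2 - 1 := by
  have : Fact (∀ r, r ^ 2 ≠ ε + 0 * r) :=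
    ⟨fun r hr ↦ hε ⟨r, by linear_combination -hr⟩⟩
  let K := QuadraticAlgebra F ε 0
  let e : K ≃ F × F := (QuadraticAlgebra.equivProd ε 0).trans (Equiv.prodComm F F)
  have : Finite K := Finite.of_equiv _ e.symm
  have norm_eq (z : K) : Algebra.norm F z = (e z).2 ^ 2 - ε * (e z).1 ^ 2 :=
    calc
      Algebra.norm F z = z.re ^ 2 + 0 * z.re * z.im - ε * z.im ^ 2 :=
        algebraNorm_quadraticAlgebra z
      _ = z.re ^ 2 - ε * z.im ^ 2 := by ring
  have card_K : Nat.card K = Nat.card F ^ 2 := by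
    rw [Nat.card_congr e, Nat.card_prod, sq]
  rw [← card_K, ← card_norm_eq_pow_mul_gcd F K n]
  congr 1
  exact Nat.card_congr (e.subtypeEquiv fun z ↦ by rw [norm_eq]).symm

end Quadratic

/-- Let `F` be a finite field of odd cardinality `q` and `ε ∈ F` a nonsquare.  The number of
quadruples `(a,b,c,d) ∈ F⁴` with `a·d − b·c = 1` such that `d² − ε·b²` is a nonzero square
equals `q·(q² − 1)/2`, i.e. exactly half of the elements of `SL(2,F)`. -/
theorem stmt2 (F : Type*) [Field F] [Fintype F] (hq : Odd (Fintype.card F))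
    (ε : F) (hε0 : ε ≠ 0) (hε : ¬ IsSquare ε) :
    Nat.card {t : F × F × F × F //
        t.1 * t.2.2.2 - t.2.1 * t.2.2.1 = 1 ∧
        ∃ x : F, x ≠ 0 ∧ t.2.2.2 ^ 2 - ε * t.2.1 ^ 2 = x ^ 2} =
      Fintype.card F * (Fintype.card F ^ 2 - 1) / 2 := by
  have coprime_column (b d : F) : (∃ x : F, x ≠ 0 ∧ d ^ 2 - ε * b ^ 2 = x ^ 2) → IsCoprime b d := by
    rintro ⟨x, hx, h⟩
    exact isCoprime_of_isUnit_sq_sub_mul_sq (h ▸ (pow_ne_zero 2 hx).isUnit)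
  have two_dvd : 2 ∣ Nat.card F - 1 := by
    rw [Nat.card_eq_fintype_card]
    exact (Nat.Odd.sub_odd hq odd_one).two_dvd
  have card_columns := card_sq_sub_mul_sq_eq_pow_mul_gcd hε 2
  rw [Nat.gcd_eq_right two_dvd] at card_columns
  rw [card_det_eq_one_and_eq_mul _ coprime_column, ← Nat.card_eq_fintype_card, ← card_columns,
    ← mul_assoc, Nat.mul_div_cancel _ two_pos]
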